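/- For every real number x > 0, the limit inferior as n → ∞ of (p_{n+1} - p_n) / p_n^x equals 0, where p_n denotes the n-th prime number. -/

import Mathlib

/-- `nthPrime n` is the `n`-th prime number with 1-based indexing:
`nthPrime 1 = 2`, `nthPrime 2 = 3`, `nthPrime 3 = 5`, ... -/
noncomputable def nthPrime (n : ℕ) : ℕ := Nat.nth Nat.Prime (n - 1)

/-!
If the limit inferior were positive, the primes would eventually satisfy `c pₙ ^ x ≤ pₙ₊₁ - pₙ` for
some `c > 0`, where `x` may be lowered until `x ≤ 1`. Gaps this large make `1 / pₙ` at most a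
constant times `pₙ ^ (-x) - pₙ₊₁ ^ (-x)`, so that `∑ 1 / pₙ` is dominated by a telescoping series,
contradicting Euler's theorem that it diverges.
-/

open Filter Finset

theorem summable_of_eventually_le_sub_succ {u f : ℕ → ℝ} (hf : BddBelow (Set.range f))
    (hu : ∀ᶠ n in atTop, 0 ≤ u n) (huf : ∀ᶠ n in atTop, u n ≤ f n - f (n + 1)) :
    Summable u := by
  obtain ⟨b, hb⟩ := hf
  obtain ⟨N, hN⟩ := eventually_atTop.mp (hu.and huf)
  rw [← summable_nat_add_iff N]
  refine summable_of_sum_range_le (c := f N - b) (fun n => (hN _ (N.le_add_left n)).1) fun m => ?_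
  calc ∑ i ∈ range m, u (i + N)
      ≤ ∑ i ∈ range m, (f (i + N) - f (i + 1 + N)) := by
        refine sum_le_sum fun i _ => ?_
        rw [add_right_comm]
        exact (hN _ (N.le_add_left i)).2
    _ = f N - f (m + N) := by rw [sum_range_sub' (fun i => f (i + N)), zero_add]
    _ ≤ f N - b := sub_le_sub_left (hb (Set.mem_range_self _)) _

theorem rpow_neg_mul_le_rpow_neg_sub_rpow_neg {a b x : ℝ} (ha : 0 < a) (hb : 0 < b)
    (hx₀ : 0 ≤ x) (hx₁ : x ≤ 1) :
    a ^ (-x) * (x * ((b - a) / b)) ≤ a ^ (-x) - b ^ (-x) := by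
  have bernoulli : (a / b) ^ x ≤ 1 + x * (a / b - 1) := by
    have h : -1 ≤ a / b - 1 := by linarith [div_pos ha hb]
    simpa using rpow_one_add_le_one_add_mul_self h hx₀ hx₁
  have factor : b ^ (-x) = a ^ (-x) * (a / b) ^ x := by
    rw [Real.div_rpow ha.le hb.le, Real.rpow_neg ha.le, Real.rpow_neg hb.le]
    have := (Real.rpow_pos_of_pos ha x).ne'
    field_simp
  calc a ^ (-x) * (x * ((b - a) / b))
      = a ^ (-x) * (1 - (1 + x * (a / b - 1))) := by field_simp; ring
    _ ≤ a ^ (-x) * (1 - (a / b) ^ x) := by gcongr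
    _ = a ^ (-x) - b ^ (-x) := by rw [factor]; ring

theorem mul_inv_le_rpow_neg_sub_rpow_neg {a b c x : ℝ} (ha : 1 ≤ a) (hc : 0 ≤ c)
    (hx₀ : 0 ≤ x) (hx₁ : x ≤ 1) (hab : c * a ^ x ≤ b - a) :
    x * c / (1 + c) * a⁻¹ ≤ a ^ (-x) - b ^ (-x) := by
  have ha₀ : 0 < a := by linarith
  have hax : 0 < a ^ x := by positivity
  have hb : 0 < b := by nlinarith
  have relative_gap : c * a ^ x / (a * (1 + c)) ≤ (b - a) / b := by
    have hpow : a ^ x ≤ a := Real.rpow_le_self_of_one_le ha hx₁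
    rw [div_le_div_iff₀ (by positivity) hb]
    calc c * a ^ x * b = c * a ^ x * a + c * a ^ x * (b - a) := by ring
      _ ≤ (b - a) * a + c * a * (b - a) := by
        have : 0 ≤ b - a := by nlinarith
        gcongr
      _ = (b - a) * (a * (1 + c)) := by ring
  calc x * c / (1 + c) * a⁻¹
      = a ^ (-x) * (x * (c * a ^ x / (a * (1 + c)))) := by
        rw [Real.rpow_neg ha₀.le]
        field_simp
    _ ≤ a ^ (-x) * (x * ((b - a) / b)) := by gcongr
    _ ≤ a ^ (-x) - b ^ (-x) := rpow_neg_mul_le_rpow_neg_sub_rpow_neg ha₀ hb hx₀ hx₁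

theorem summable_inv_of_mul_rpow_le_gap {q : ℕ → ℝ} {c x : ℝ} (hc : 0 < c) (hx : 0 < x)
    (hq : Tendsto q atTop atTop) (hgap : ∀ᶠ n in atTop, c * q n ^ x ≤ q (n + 1) - q n) :
    Summable fun n => (q n)⁻¹ := by
  set y := min x 1
  have hy : 0 < y := lt_min hx one_pos
  have hq₁ : ∀ᶠ n in atTop, 1 ≤ q n := hq.eventually_ge_atTop 1
  have hK : 0 < y * c / (1 + c) := by positivity
  rw [← summable_mul_left_iff hK.ne']
  refine summable_of_eventually_le_sub_succ (f := fun n => q n ^ (-y))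
    ((tendsto_rpow_neg_atTop hy).comp hq).bddBelow_range ?_ ?_
  · filter_upwards [hq₁] with n hn
    positivity
  · filter_upwards [hq₁, hgap] with n hn hgap_n
    refine mul_inv_le_rpow_neg_sub_rpow_neg hn hc.le hy.le (min_le_right x 1) ?_
    calc c * q n ^ y ≤ c * q n ^ x := by
          gcongr
          exact min_le_left x 1
      _ ≤ q (n + 1) - q n := hgap_n

theorem liminf_gap_div_rpow_eq_zero {q : ℕ → ℝ} {x : ℝ} (hx : 0 < x) (hmono : Monotone q)
    (htop : Tendsto q atTop atTop) (hsum : ¬ Summable fun n => (q n)⁻¹) :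
    liminf (fun n => (q (n + 1) - q n) / q n ^ x) atTop = 0 := by
  have hpos : ∀ᶠ n in atTop, 0 < q n ^ x :=
    (htop.eventually_gt_atTop 0).mono fun n hn => Real.rpow_pos_of_pos hn x
  rw [liminf_eq]
  refine IsGreatest.csSup_eq ⟨?_, fun c hc => ?_⟩
  · filter_upwards [hpos] with n hn
    exact div_nonneg (sub_nonneg.mpr (hmono n.le_succ)) hn.le
  · by_contra! hc₀
    refine hsum (summable_inv_of_mul_rpow_le_gap hc₀ hx htop ?_)
    filter_upwards [hpos, hc] with n hn hcn
    exact (le_div_iff₀ hn).mp hcn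

theorem summable_comp_nth_iff_summable_indicator {p : ℕ → Prop} (hp : {n | p n}.Infinite)
    {α : Type*} [AddCommMonoid α] [TopologicalSpace α] (f : ℕ → α) :
    Summable (fun n => f (Nat.nth p n)) ↔ Summable ({n | p n}.indicator f) := by
  rw [← Nat.range_nth_of_infinite hp,
    ← (Nat.nth_injective hp).summable_iff fun _ h => Set.indicator_of_notMem h f,
    Set.indicator_range_comp]
  rfl

theorem not_summable_inv_nthPrime : ¬ Summable fun n => (nthPrime n : ℝ)⁻¹ := by
  rw [← summable_nat_add_iff 1]
  simp only [nthPrime, Nat.add_sub_cancel, ← one_div]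
  rw [summable_comp_nth_iff_summable_indicator Nat.infinite_setOfPred_prime fun n => 1 / (n : ℝ)]
  exact not_summable_one_div_on_primes

theorem monotone_nthPrime : Monotone nthPrime := fun _ _ h =>
  Nat.nth_monotone Nat.infinite_setOfPred_prime (Nat.sub_le_sub_right h 1)

theorem tendsto_nthPrime_atTop : Tendsto nthPrime atTop atTop :=
  (Nat.nth_strictMono Nat.infinite_setOfPred_prime).tendsto_atTop.comp (tendsto_sub_atTop_nat 1)

/-- For every real `x > 0`, `liminf (p (n+1) - p n) / p n ^ x = 0`. -/
theorem liminf_prime_gap_div_pow (x : ℝ) (hx : 0 < x) :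
    Filter.liminf
      (fun n => ((nthPrime (n + 1) : ℝ) - (nthPrime n : ℝ)) / (nthPrime n : ℝ) ^ x)
      Filter.atTop = 0 :=
  liminf_gap_div_rpow_eq_zero (q := fun n => (nthPrime n : ℝ)) hx
    (Nat.mono_cast.comp monotone_nthPrime)
    (tendsto_natCast_atTop_atTop.comp tendsto_nthPrime_atTop) not_summable_inv_nthPrime
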